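/- In the transverse p-spin model with p ≥ 2, for every N ≥ p, β > 0, J > 0 and b ≥ 0, setting α_p(N) = N!/((N−p)!·N^p), one has E[⟨S_1^z S_2^z ⋯ S_p^z⟩²] ≥ Φ(pβb · E[⟨S_1^x⟩]) + (2/(βJ·N·α_p(N))) · E[⟨U_N⟩]. -/

import Mathlib

open Matrix MeasureTheory ProbabilityTheory
open scoped Kronecker

noncomputable section

abbrev Conf (N : ℕ) := Fin N → Fin 2

def Sz (N : ℕ) (j : Fin N) : Matrix (Conf N) (Conf N) ℂ :=
  Matrix.diagonal fun σ => if σ j = 0 then 1 else -1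

def Sx (N : ℕ) (j : Fin N) : Matrix (Conf N) (Conf N) ℂ :=
  Matrix.of fun σ τ => if τ = Function.update σ j (1 - σ j) then 1 else 0

/-- The product `S^z_{j_1} S^z_{j_2} ⋯ S^z_{j_p}` over an index set `s`. -/
def SzProd (N : ℕ) (s : Finset (Fin N)) : Matrix (Conf N) (Conf N) ℂ :=
  Matrix.diagonal fun σ => ∏ j ∈ s, (if σ j = 0 then (1 : ℂ) else -1)

/-- The zero-field `p`-spin Hamiltonian
`U_N = −√(p!/(2N^{p−1})) Σ_{j_1<⋯<j_p} g_{j_1⋯j_p} S^z_{j_1} ⋯ S^z_{j_p}`. -/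
def UNp (N p : ℕ) (g : Finset (Fin N) → ℝ) : Matrix (Conf N) (Conf N) ℂ :=
  (-(Real.sqrt ((Nat.factorial p : ℝ) / (2 * (N : ℝ) ^ (p - 1))))) •
    ∑ s : Finset (Fin N), if s.card = p then g s • SzProd N s else 0

/-- The transverse `p`-spin Hamiltonian `H_N = J·U_N − b·Σ_j S_j^x`. -/
def HNp (N p : ℕ) (J b : ℝ) (g : Finset (Fin N) → ℝ) : Matrix (Conf N) (Conf N) ℂ :=
  J • UNp N p g - b • ∑ j : Fin N, Sx N j

/-- Gibbs expectation (real part of the trace ratio). -/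
def gibbs {n : Type*} [Fintype n] [DecidableEq n] (β : ℝ) (H A : Matrix n n ℂ) : ℝ :=
  ((NormedSpace.exp ((-β) • H) * A).trace / (NormedSpace.exp ((-β) • H)).trace).re

/-- The replica-overlap operator `R_N = N⁻¹ Σ_j S_j^z ⊗ S_j^z` on `ℋ_N ⊗ ℋ_N`. -/
def RN (N : ℕ) : Matrix (Conf N × Conf N) (Conf N × Conf N) ℂ :=
  ((N : ℝ)⁻¹) • ∑ j : Fin N, (Sz N j) ⊗ₖ (Sz N j)

/-- The duplicated Hamiltonian `H_N ⊗ 1 + 1 ⊗ H_N`. -/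
def Hdup (N p : ℕ) (J b : ℝ) (g : Finset (Fin N) → ℝ) :
    Matrix (Conf N × Conf N) (Conf N × Conf N) ℂ :=
  (HNp N p J b g) ⊗ₖ (1 : Matrix (Conf N) (Conf N) ℂ)
    + (1 : Matrix (Conf N) (Conf N) ℂ) ⊗ₖ (HNp N p J b g)

/-- `α_p(N) = N!/((N−p)!·N^p)`. -/
def alphaP (N p : ℕ) : ℝ :=
  (Nat.factorial N : ℝ) / ((Nat.factorial (N - p) : ℝ) * (N : ℝ) ^ p)

/-- The index set `{1, …, p}` of the first `p` spins. -/
def firstP (N p : ℕ) : Finset (Fin N) := Finset.univ.filter fun j : Fin N => (j : ℕ) < p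

/- Let `A = S^z_1 ⋯ S^z_p` and let `(·, ·)` be the Duhamel two-point function. Differentiating the
Gibbs state in a coupling gives the truncated Duhamel correlation, so Gaussian integration by parts,
together with the symmetry of the disorder under spin permutations, yields
`E[⟨A⟩²] = E[(A, A)] + 2/(βJNα_p(N)) · E[⟨U_N⟩]`.

It remains to bound `E[(A, A)]` from below by the Falk–Bruch inequality
`(A, A) ≥ Φ(β⟨[A, [H, A]]⟩/4)`, in which `[A, [H, A]] = 4b Σ_{j ≤ p} S^x_j`. The argument of `Φ` is
an average over pairs of energy levels, and again over the disorder. Replacing the convex function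
`Φ` by its supporting line at `pβb E[⟨S^x_1⟩]` reduces the inequality to one for a single pair of
levels, and both averages then follow by linearity. -/

section Scalar

open Real Set

lemma nonneg_of_hasDerivAt_nonneg {f f' : ℝ → ℝ} (hf : ∀ x, HasDerivAt f (f' x) x) (h0 : f 0 = 0)
    (hf' : ∀ x, 0 < x → 0 ≤ f' x) {y : ℝ} (hy : 0 ≤ y) : 0 ≤ f y := by
  have hmono : MonotoneOn f (Ici 0) :=
    monotoneOn_of_hasDerivWithinAt_nonneg (convex_Ici 0)
      (fun x _ => (hf x).continuousAt.continuousWithinAt) (fun x _ => (hf x).hasDerivWithinAt)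
      (fun x hx => hf' x (by simpa using hx))
  simpa [h0] using hmono (mem_Ici.2 le_rfl) (mem_Ici.2 hy) hy

lemma sinh_le_mul_cosh {y : ℝ} (hy : 0 ≤ y) : sinh y ≤ y * cosh y := by
  have hd : ∀ x, HasDerivAt (fun x => x * cosh x - sinh x) (x * sinh x) x := fun x =>
    (((hasDerivAt_id x).mul (hasDerivAt_cosh x)).sub (hasDerivAt_sinh x)).congr_deriv
      (by simp only [id]; ring)
  exact sub_nonneg.1 <| nonneg_of_hasDerivAt_nonneg hd (by simp)
    (fun x hx => mul_nonneg hx.le (sinh_nonneg_iff.2 hx.le)) hy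

lemma mul_cosh_le_mul_sinh {y : ℝ} (hy : 0 ≤ y) : y * cosh y ≤ (1 + y ^ 2 / 3) * sinh y := by
  have hd : ∀ x, HasDerivAt (fun x => (1 + x ^ 2 / 3) * sinh x - x * cosh x)
      (x / 3 * (x * cosh x - sinh x)) x := fun x =>
    ((((hasDerivAt_pow 2 x).div_const 3).const_add 1 |>.mul (hasDerivAt_sinh x)).sub
      ((hasDerivAt_id x).mul (hasDerivAt_cosh x))).congr_deriv (by push_cast [id]; ring)
  exact sub_nonneg.1 <| nonneg_of_hasDerivAt_nonneg hd (by simp)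
    (fun x hx => mul_nonneg (by positivity) (sub_nonneg.2 (sinh_le_mul_cosh hx.le))) hy

lemma add_cube_div_six_le_sinh {y : ℝ} (hy : 0 ≤ y) : y + y ^ 3 / 6 ≤ sinh y := by
  have hpartial :
      ∑ n ∈ Finset.range 2, y ^ (2 * n + 1) / (2 * n + 1).factorial = y + y ^ 3 / 6 := by
    norm_num [Finset.sum_range_succ, Nat.factorial]
  rw [← hpartial]
  exact sum_le_hasSum (Finset.range 2) (fun n _ => by positivity) (hasSum_sinh y)

lemma mul_tanh_eq (y : ℝ) : y * tanh y = y * sinh y / cosh y := by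
  rw [tanh_eq_sinh_div_cosh, mul_div_assoc]

lemma self_le_mul_tanh {y : ℝ} (hy : 0 ≤ y) : y ≤ (1 + y ^ 2 / 3) * tanh y := by
  rw [tanh_eq_sinh_div_cosh, ← mul_div_assoc, le_div_iff₀ (cosh_pos y)]
  exact mul_cosh_le_mul_sinh hy

lemma two_mul_sq_le_sinh_sq_add {y : ℝ} (hy : 0 ≤ y) :
    2 * y ^ 2 ≤ sinh y ^ 2 + y * tanh y := by
  have hsinh : y ^ 2 + y ^ 4 / 3 ≤ sinh y ^ 2 :=
    calc y ^ 2 + y ^ 4 / 3 ≤ (y + y ^ 3 / 6) ^ 2 := by nlinarith [sq_nonneg (y ^ 3)]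
      _ ≤ sinh y ^ 2 := pow_le_pow_left₀ (by positivity) (add_cube_div_six_le_sinh hy) 2
  have htanh : y ^ 2 ≤ (1 + y ^ 2 / 3) * (y * tanh y) := by
    nlinarith [self_le_mul_tanh hy]
  by_contra! hlt
  have : y * tanh y < y ^ 2 - y ^ 4 / 3 := by linarith
  nlinarith [mul_lt_mul_of_pos_left this (by positivity : 0 < 1 + y ^ 2 / 3), sq_nonneg (y ^ 3)]

lemma hasDerivAt_tanh (y : ℝ) : HasDerivAt tanh (1 / cosh y ^ 2) y := by
  have hfun : tanh = fun x => sinh x / cosh x := funext tanh_eq_sinh_div_cosh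
  rw [hfun]
  refine ((hasDerivAt_sinh y).div (hasDerivAt_cosh y) (cosh_pos y).ne').congr_deriv ?_
  rw [← cosh_sq_sub_sinh_sq y, sq, sq]

lemma continuous_tanh : Continuous tanh :=
  continuous_iff_continuousAt.2 fun y => (hasDerivAt_tanh y).continuousAt

/-- Minus the slope, at abscissa `y tanh y`, of the curve `y ↦ (y tanh y, tanh y / y)`, which is
the graph of `Φ`. -/
def falkBruchSlope (y : ℝ) : ℝ := (sinh y * cosh y - y) / (y ^ 2 * (sinh y * cosh y + y))

lemma hasDerivAt_falkBruchSlope {y : ℝ} (hy : 0 < y) :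
    HasDerivAt falkBruchSlope
      (-(2 * y * cosh y ^ 2 * (sinh y ^ 2 + y * tanh y - 2 * y ^ 2))
        / (y ^ 2 * (sinh y * cosh y + y)) ^ 2) y := by
  have := sinh_pos_iff.2 hy
  have := cosh_pos y
  have hsc : HasDerivAt (fun y => sinh y * cosh y) (cosh y ^ 2 + sinh y ^ 2) y :=
    ((hasDerivAt_sinh y).mul (hasDerivAt_cosh y)).congr_deriv (by ring)
  have hden : HasDerivAt (fun y => y ^ 2 * (sinh y * cosh y + y))
      (2 * y * (sinh y * cosh y + y) + y ^ 2 * (cosh y ^ 2 + sinh y ^ 2 + 1)) y :=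
    ((hasDerivAt_pow 2 y).mul (hsc.add (hasDerivAt_id y))).congr_deriv (by simp)
  refine ((hsc.sub (hasDerivAt_id y)).div hden (by positivity)).congr_deriv ?_
  rw [mul_tanh_eq]
  simp only [Pi.sub_apply, id]
  field_simp
  linear_combination -2 * y ^ 2 * cosh_sq y

lemma antitoneOn_falkBruchSlope : AntitoneOn falkBruchSlope (Ioi 0) := by
  refine antitoneOn_of_hasDerivWithinAt_nonpos (convex_Ioi 0)
    (fun y hy => (hasDerivAt_falkBruchSlope hy).continuousAt.continuousWithinAt)
    (fun y hy => (hasDerivAt_falkBruchSlope (interior_subset hy)).hasDerivWithinAt) fun y hy => ?_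
  have hy : 0 < y := interior_subset hy
  have hnum : 0 ≤ sinh y ^ 2 + y * tanh y - 2 * y ^ 2 :=
    sub_nonneg.2 (two_mul_sq_le_sinh_sq_add hy.le)
  exact div_nonpos_of_nonpos_of_nonneg (neg_nonpos.2 (by positivity)) (by positivity)

lemma hasDerivAt_tanh_div_add (m : ℝ) {y : ℝ} (hy : 0 < y) :
    HasDerivAt (fun y => tanh y / y + m * (y * tanh y))
      ((sinh y * cosh y + y) / cosh y ^ 2 * (m - falkBruchSlope y)) y := by
  have := sinh_pos_iff.2 hy
  have := cosh_pos y
  refine (((hasDerivAt_tanh y).div (hasDerivAt_id y) hy.ne').add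
    (((hasDerivAt_id y).mul (hasDerivAt_tanh y)).const_mul m)).congr_deriv ?_
  simp only [id, tanh_eq_sinh_div_cosh, falkBruchSlope]
  field_simp
  ring

/-- The line `x ↦ C - m x` lies below the graph of `Φ` on `(0, ∞)`, parametrized as
`y ↦ (y tanh y, tanh y / y)`; such lines are used in place of the convexity of `Φ`. -/
def IsFalkBruchMinorant (C m : ℝ) : Prop := ∀ y : ℝ, 0 < y → C ≤ tanh y / y + m * (y * tanh y)

lemma isFalkBruchMinorant_tangent {r : ℝ} (hr : 0 < r) :
    IsFalkBruchMinorant (tanh r / r + falkBruchSlope r * (r * tanh r)) (falkBruchSlope r) := by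
  intro y hy
  have hpos : ∀ x : ℝ, 0 < x → 0 ≤ (sinh x * cosh x + x) / cosh x ^ 2 := fun x hx => by
    have := sinh_pos_iff.2 hx
    have := cosh_pos x
    positivity
  have hderiv := fun x => hasDerivAt_tanh_div_add (falkBruchSlope r) (y := x)
  rcases le_total y r with hyr | hry
  · have hanti : AntitoneOn (fun y => tanh y / y + falkBruchSlope r * (y * tanh y)) (Ioc 0 r) :=
      antitoneOn_of_hasDerivWithinAt_nonpos (convex_Ioc 0 r)
        (fun x hx => (hderiv x hx.1).continuousAt.continuousWithinAt)
        (fun x hx => (hderiv x (interior_subset hx).1).hasDerivWithinAt)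
        fun x hx => by
          obtain ⟨hx0, hxr⟩ := interior_subset hx
          exact mul_nonpos_of_nonneg_of_nonpos (hpos x hx0)
            (sub_nonpos.2 (antitoneOn_falkBruchSlope hx0 hr hxr))
    exact hanti ⟨hy, hyr⟩ ⟨hr, le_rfl⟩ hyr
  · have hmono : MonotoneOn (fun y => tanh y / y + falkBruchSlope r * (y * tanh y)) (Ici r) :=
      monotoneOn_of_hasDerivWithinAt_nonneg (convex_Ici r)
        (fun x hx => (hderiv x (hr.trans_le hx)).continuousAt.continuousWithinAt)
        (fun x hx => (hderiv x (hr.trans_le (interior_subset hx))).hasDerivWithinAt)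
        fun x hx => by
          have hrx : r ≤ x := interior_subset hx
          exact mul_nonneg (hpos x (hr.trans_le hrx))
            (sub_nonneg.2 (antitoneOn_falkBruchSlope hr (hr.trans_le hrx) hrx))
    exact hmono self_mem_Ici hry hry

lemma isFalkBruchMinorant_one : IsFalkBruchMinorant 1 (1 / 3) := by
  intro y hy
  have h : (1 + y ^ 2 / 3) * tanh y / y = tanh y / y + 1 / 3 * (y * tanh y) := by
    field_simp
  rw [← h, one_le_div hy]
  exact self_le_mul_tanh hy.le

lemma sub_one_le_mul_tanh {r : ℝ} (hr : 0 ≤ r) : r - 1 ≤ r * tanh r := by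
  have hc := cosh_pos r
  rw [mul_tanh_eq, le_div_iff₀ hc]
  have hexp : cosh r - sinh r ≤ 1 := by
    rw [cosh_sub_sinh]
    exact exp_le_one_iff.2 (neg_nonpos.2 hr)
  nlinarith [mul_le_mul_of_nonneg_left hexp hr, self_le_sinh_iff.2 hr, sinh_lt_cosh r]

lemma exists_mul_tanh_eq {x : ℝ} (hx : 0 < x) : ∃ r, 0 < r ∧ r * tanh r = x := by
  have hcont : Continuous fun r => r * tanh r := continuous_id.mul continuous_tanh
  have hmem : x ∈ Icc ((0 : ℝ) * tanh 0) ((x + 1) * tanh (x + 1)) :=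
    ⟨by simpa using hx.le, by linarith [sub_one_le_mul_tanh (by linarith : 0 ≤ x + 1)]⟩
  obtain ⟨r, hr, rfl⟩ := intermediate_value_Icc (by linarith) hcont.continuousOn hmem
  exact ⟨r, hr.1.lt_of_ne (by rintro rfl; simp at hx), rfl⟩

lemma exists_isFalkBruchMinorant {Φ : ℝ → ℝ} (hΦ : ∀ r, 0 < r → Φ (r * tanh r) = tanh r / r)
    (hΦ0 : Φ 0 = 1) {x : ℝ} (hx : 0 ≤ x) : ∃ C m, IsFalkBruchMinorant C m ∧ Φ x = C - m * x := by
  rcases hx.eq_or_lt with rfl | hx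
  · exact ⟨1, 1 / 3, isFalkBruchMinorant_one, by rw [hΦ0]; ring⟩
  · obtain ⟨r, hr, rfl⟩ := exists_mul_tanh_eq hx
    exact ⟨_, _, isFalkBruchMinorant_tangent hr, by rw [hΦ r hr]; ring⟩

lemma IsFalkBruchMinorant.le_one {C m : ℝ} (h : IsFalkBruchMinorant C m) : C ≤ 1 := by
  have hbound : ∀ᶠ y in nhdsWithin (0 : ℝ) (Ioi 0), C ≤ 1 + m * (y * tanh y) := by
    filter_upwards [self_mem_nhdsWithin] with y (hy : 0 < y)
    have htanh : tanh y / y ≤ 1 := by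
      rw [div_le_one hy, tanh_eq_sinh_div_cosh, div_le_iff₀ (cosh_pos y)]
      exact sinh_le_mul_cosh hy.le
    linarith [h y hy]
  have hcont : Continuous fun y => 1 + m * (y * tanh y) :=
    continuous_const.add (continuous_const.mul (continuous_id.mul continuous_tanh))
  simpa using ge_of_tendsto ((hcont.tendsto 0).mono_left nhdsWithin_le_nhds) hbound

/-- The logarithmic mean `(eᵃ - eᵇ) / (a - b)` of `eᵃ` and `eᵇ`, in integral form so that it also
makes sense for `a = b`. -/
def expLogMean (a b : ℝ) : ℝ := ∫ s in (0 : ℝ)..1, exp (s * a + (1 - s) * b)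

lemma expLogMean_self (a : ℝ) : expLogMean a a = exp a := by
  have h : ∀ s : ℝ, s * a + (1 - s) * a = a := fun s => by ring
  simp [expLogMean, h]

lemma expLogMean_of_ne {a b : ℝ} (hab : a ≠ b) :
    expLogMean a b = (exp a - exp b) / (a - b) := by
  have hab' : a - b ≠ 0 := sub_ne_zero.2 hab
  have hline : ∀ s : ℝ, HasDerivAt (fun s => s * a + (1 - s) * b) (a - b) s := fun s =>
    (((hasDerivAt_id s).mul_const a).add (((hasDerivAt_id s).const_sub 1).mul_const b)).congr_deriv
      (by ring)
  have hprim : ∀ s : ℝ, HasDerivAt (fun s => exp (s * a + (1 - s) * b) / (a - b))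
      (exp (s * a + (1 - s) * b)) s := fun s =>
    ((hline s).exp.div_const (a - b)).congr_deriv (by field_simp)
  rw [expLogMean, intervalIntegral.integral_eq_sub_of_hasDerivAt (fun s _ => hprim s)
    (Continuous.intervalIntegrable (by fun_prop) _ _)]
  simp [sub_div]

lemma expLogMean_comm (a b : ℝ) : expLogMean a b = expLogMean b a := by
  rcases eq_or_ne a b with rfl | hab
  · rfl
  · rw [expLogMean_of_ne hab, expLogMean_of_ne hab.symm, ← neg_sub (exp b), ← neg_sub b,
      neg_div_neg_eq]

lemma expLogMean_nonneg (a b : ℝ) : 0 ≤ expLogMean a b :=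
  intervalIntegral.integral_nonneg zero_le_one fun _ _ => (exp_pos _).le

lemma expLogMean_le (a b : ℝ) : expLogMean a b ≤ (exp a + exp b) / 2 := by
  calc expLogMean a b
      ≤ ∫ s in (0 : ℝ)..1, (exp b + s * (exp a - exp b)) := by
        refine intervalIntegral.integral_mono_on zero_le_one
          (Continuous.intervalIntegrable (by fun_prop) _ _)
          (Continuous.intervalIntegrable (by fun_prop) _ _) fun s hs => ?_
        have := convexOn_exp.2 (mem_univ a) (mem_univ b) hs.1 (sub_nonneg.2 hs.2) (by ring)
        simp only [smul_eq_mul] at this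
        linarith
    _ = (exp a + exp b) / 2 := by
        rw [intervalIntegral.integral_add intervalIntegrable_const
          (Continuous.intervalIntegrable (by fun_prop) _ _), intervalIntegral.integral_const,
          intervalIntegral.integral_mul_const, integral_id, smul_eq_mul]
        ring

-- With `y = (a - b) / 2` this is the minorant inequality at `y`, multiplied by
-- `(exp a + exp b) / 2 = exp ((a + b) / 2) * cosh y`.
lemma IsFalkBruchMinorant.le_expLogMean {C m : ℝ} (h : IsFalkBruchMinorant C m) (a b : ℝ) :
    C * ((exp a + exp b) / 2) - m * ((a - b) * (exp a - exp b) / 4) ≤ expLogMean a b := by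
  wlog hba : b ≤ a generalizing a b
  · rw [expLogMean_comm]
    linarith [this b a (le_of_not_ge hba)]
  obtain ⟨c, y, hy, rfl, rfl⟩ : ∃ c y, 0 ≤ y ∧ a = c + y ∧ b = c - y :=
    ⟨(a + b) / 2, (a - b) / 2, by linarith, by ring, by ring⟩
  rcases hy.eq_or_lt with rfl | hy
  · have := mul_le_mul_of_nonneg_right h.le_one (exp_pos c).le
    simpa [expLogMean_self] using this
  · have hc := cosh_pos y
    have hadd : exp (c + y) = exp c * (cosh y + sinh y) := by rw [exp_add, cosh_add_sinh]
    have hsub : exp (c - y) = exp c * (cosh y - sinh y) := by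
      rw [sub_eq_add_neg, exp_add, cosh_sub_sinh]
    have key := mul_le_mul_of_nonneg_left (h y hy) (mul_pos (exp_pos c) hc).le
    rw [expLogMean_of_ne (by linarith), hadd, hsub]
    have hmean : exp c * cosh y * (tanh y / y + m * (y * tanh y))
        = (exp c * (cosh y + sinh y) - exp c * (cosh y - sinh y)) / (c + y - (c - y))
          + m * (exp c * y * sinh y) := by
      rw [tanh_eq_sinh_div_cosh]
      have : c + y - (c - y) = 2 * y := by ring
      rw [this]
      field_simp
      ring
    rw [hmean] at key
    linarith

end Scalar

section Duhamel

variable {𝔸 : Type*} [NormedRing 𝔸] [NormedAlgebra ℝ 𝔸] [CompleteSpace 𝔸]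

@[fun_prop]
lemma continuous_normedSpace_exp : Continuous (NormedSpace.exp : 𝔸 → 𝔸) :=
  letI := NormedAlgebra.restrictScalars ℚ ℝ 𝔸
  NormedSpace.exp_continuous

lemma hasDerivAt_exp_smul_mul_exp (X Y : 𝔸) (s : ℝ) :
    HasDerivAt (fun s : ℝ => NormedSpace.exp (s • Y) * NormedSpace.exp ((1 - s) • X))
      (NormedSpace.exp (s • Y) * (Y - X) * NormedSpace.exp ((1 - s) • X)) s := by
  have hY : HasDerivAt (fun s : ℝ => NormedSpace.exp (s • Y)) (NormedSpace.exp (s • Y) * Y) s :=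
    hasDerivAt_exp_smul_const Y s
  have hX : HasDerivAt (fun s : ℝ => NormedSpace.exp ((1 - s) • X))
      (-(X * NormedSpace.exp ((1 - s) • X))) s :=
    ((hasDerivAt_exp_smul_const' X (1 - s)).scomp s
      ((hasDerivAt_id s).const_sub 1)).congr_deriv (by simp)
  exact (hY.mul hX).congr_deriv (by noncomm_ring)

theorem exp_sub_exp_eq_integral (X Y : 𝔸) :
    NormedSpace.exp Y - NormedSpace.exp X
      = ∫ s in (0 : ℝ)..1, NormedSpace.exp (s • Y) * (Y - X) * NormedSpace.exp ((1 - s) • X) := by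
  rw [intervalIntegral.integral_eq_sub_of_hasDerivAt
    (fun s _ => hasDerivAt_exp_smul_mul_exp X Y s)
    (Continuous.intervalIntegrable (by fun_prop) _ _)]
  simp

theorem hasDerivAt_exp_add_smul (X V : 𝔸) :
    HasDerivAt (fun h : ℝ => NormedSpace.exp (X + h • V))
      (∫ s in (0 : ℝ)..1, NormedSpace.exp (s • X) * V * NormedSpace.exp ((1 - s) • X)) 0 := by
  let slope : ℝ → 𝔸 := fun h =>
    ∫ s in (0 : ℝ)..1, NormedSpace.exp (s • (X + h • V)) * V * NormedSpace.exp ((1 - s) • X)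
  have hslope : Continuous slope :=
    intervalIntegral.continuous_parametric_intervalIntegral_of_continuous' (by fun_prop) 0 1
  have hexp : ∀ h : ℝ, NormedSpace.exp (X + h • V) - NormedSpace.exp X = h • slope h := fun h => by
    simp [exp_sub_exp_eq_integral, slope]
  rw [hasDerivAt_iff_tendsto_slope]
  have hlim : Filter.Tendsto slope (nhdsWithin 0 {0}ᶜ)
      (nhds (∫ s in (0 : ℝ)..1, NormedSpace.exp (s • X) * V * NormedSpace.exp ((1 - s) • X))) := by
    simpa [slope] using (hslope.tendsto 0).mono_left nhdsWithin_le_nhds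
  refine hlim.congr' ?_
  filter_upwards [self_mem_nhdsWithin] with h (hh : h ≠ 0)
  simp [slope_def_module, hexp, hh]

end Duhamel

section Trace

open scoped Matrix.Norms.L2Operator MatrixOrder

variable {n : Type*} [Fintype n] [DecidableEq n]

theorem hasDerivAt_trace_exp_add_smul (X V B : Matrix n n ℂ) :
    HasDerivAt (fun h : ℝ => (NormedSpace.exp (X + h • V) * B).trace.re)
      (∫ s in (0 : ℝ)..1,
        (NormedSpace.exp (s • X) * V * NormedSpace.exp ((1 - s) • X) * B).trace.re) 0 := by
  let L : Matrix n n ℂ →L[ℝ] ℝ := LinearMap.toContinuousLinearMap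
    (Complex.reLm ∘ₗ Matrix.traceLinearMap n ℝ ℂ ∘ₗ LinearMap.mulRight ℝ B)
  refine (L.hasFDerivAt.comp_hasDerivAt 0 (hasDerivAt_exp_add_smul X V)).congr_deriv ?_
  exact (L.intervalIntegral_comp_comm (Continuous.intervalIntegrable (by fun_prop) _ _)).symm

end Trace

section Gibbs

open scoped Matrix.Norms.L2Operator MatrixOrder ComplexOrder

variable {n : Type*} [Fintype n] [DecidableEq n] {H A : Matrix n n ℂ}

lemma posDef_exp (hH : H.IsHermitian) : (NormedSpace.exp H).PosDef :=
  (Matrix.PosSemidef.posDef_iff_isUnit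
    (Matrix.nonneg_iff_posSemidef.mp (IsSelfAdjoint.exp_nonneg hH))).mpr (Matrix.isUnit_exp H)

theorem trace_exp_nonneg (hH : H.IsHermitian) : 0 ≤ (NormedSpace.exp H).trace :=
  (posDef_exp hH).posSemidef.trace_nonneg

theorem trace_exp_re_pos [Nonempty n] (hH : H.IsHermitian) : 0 < (NormedSpace.exp H).trace.re :=
  (Complex.lt_def.mp (posDef_exp hH).trace_pos).1

lemma gibbs_eq_re_div_re (hH : H.IsHermitian) (β : ℝ) (A : Matrix n n ℂ) :
    gibbs β H A
      = (NormedSpace.exp ((-β) • H) * A).trace.re / (NormedSpace.exp ((-β) • H)).trace.re := by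
  have him : (NormedSpace.exp ((-β) • H)).trace.im = 0 :=
    (Complex.le_def.mp (trace_exp_nonneg (hH.smul (.all _)))).2.symm
  rw [gibbs, ← Complex.re_add_im (NormedSpace.exp ((-β) • H)).trace, him]
  simp [Complex.div_ofReal_re]

lemma isLinearMap_gibbs (β : ℝ) (H : Matrix n n ℂ) : IsLinearMap ℝ (gibbs β H) where
  map_add A B := by simp [gibbs, mul_add, add_div]
  map_smul c A := by simp [gibbs, mul_div_assoc]

theorem gibbs_one [Nonempty n] (hH : H.IsHermitian) (β : ℝ) : gibbs β H 1 = 1 := by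
  rw [gibbs_eq_re_div_re hH, mul_one, div_self (trace_exp_re_pos (hH.smul (.all _))).ne']

theorem gibbs_nonneg (hH : H.IsHermitian) (β : ℝ) (hA : 0 ≤ A) : 0 ≤ gibbs β H A := by
  obtain ⟨B, rfl⟩ := CStarAlgebra.nonneg_iff_eq_star_mul_self.mp hA
  have hexp := (posDef_exp (hH.smul (.all (-β)))).posSemidef
  rw [gibbs_eq_re_div_re hH, ← mul_assoc, Matrix.trace_mul_comm, ← mul_assoc]
  exact div_nonneg (Complex.le_def.mp (hexp.mul_mul_conjTranspose_same B).trace_nonneg).1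
    (Complex.le_def.mp hexp.trace_nonneg).1

theorem abs_gibbs_le_norm [Nonempty n] (hH : H.IsHermitian) (β : ℝ) (hA : A.IsHermitian) :
    |gibbs β H A| ≤ ‖A‖ := by
  have hone : gibbs β H (algebraMap ℝ _ ‖A‖) = ‖A‖ := by
    rw [Algebra.algebraMap_eq_smul_one, (isLinearMap_gibbs β H).map_smul, gibbs_one hH, smul_eq_mul,
      mul_one]
  have hupper := gibbs_nonneg hH β (sub_nonneg.mpr (IsSelfAdjoint.le_algebraMap_norm_self hA))
  have hlower := gibbs_nonneg hH β (sub_nonneg.mpr (IsSelfAdjoint.neg_algebraMap_norm_le_self hA))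
  rw [(isLinearMap_gibbs β H).map_sub] at hupper hlower
  rw [(isLinearMap_gibbs β H).map_neg] at hlower
  exact abs_le.mpr ⟨by linarith, by linarith⟩

theorem gibbs_map {m : Type*} [Fintype m] [DecidableEq m] (e : Matrix n n ℂ ≃ₐ[ℂ] Matrix m m ℂ)
    (β : ℝ) (H A : Matrix n n ℂ) : gibbs β (e H) (e A) = gibbs β H A := by
  let := NormedAlgebra.restrictScalars ℚ ℝ (Matrix n n ℂ)
  have hcont : Continuous e := e.toLinearMap.continuous_of_finiteDimensional
  have hexp : NormedSpace.exp ((-β) • e H) = e (NormedSpace.exp ((-β) • H)) := by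
    rw [NormedSpace.map_exp e hcont, ← Complex.coe_smul, ← Complex.coe_smul, map_smul]
  rw [gibbs, gibbs, hexp, ← map_mul, Matrix.trace_map, Matrix.trace_map]

/-- The Duhamel (Bogoliubov) two-point function
`(A, B) = ∫₀¹ Tr(e^{-sβH} A e^{-(1-s)βH} B) ds / Tr e^{-βH}`, real part taken as in `gibbs`. -/
def duhamel (β : ℝ) (H A B : Matrix n n ℂ) : ℝ :=
  (∫ s in (0 : ℝ)..1, (NormedSpace.exp (s • (-β) • H) * A
    * NormedSpace.exp ((1 - s) • (-β) • H) * B).trace.re) / (NormedSpace.exp ((-β) • H)).trace.re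

lemma duhamel_one_right (hH : H.IsHermitian) (β : ℝ) (A : Matrix n n ℂ) :
    duhamel β H A 1 = gibbs β H A := by
  have htrace : ∀ s : ℝ, (NormedSpace.exp (s • (-β) • H) * A
      * NormedSpace.exp ((1 - s) • (-β) • H)).trace = (NormedSpace.exp ((-β) • H) * A).trace :=
    fun s => by
      rw [Matrix.trace_mul_comm, ← mul_assoc, ← Matrix.exp_add_of_commute _ _
        (((Commute.refl ((-β) • H)).smul_left _).smul_right _), ← add_smul]
      simp
  simp only [duhamel, mul_one, htrace, intervalIntegral.integral_const, sub_zero, one_smul,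
    gibbs_eq_re_div_re hH]

theorem hasDerivAt_gibbs [Nonempty n] {V : Matrix n n ℂ} (hH : H.IsHermitian) (hV : V.IsHermitian)
    (β : ℝ) (A : Matrix n n ℂ) :
    HasDerivAt (fun h : ℝ => gibbs β (H + h • V) A)
      (-β * (duhamel β H V A - gibbs β H V * gibbs β H A)) 0 := by
  have hZ := (trace_exp_re_pos (hH.smul (.all (-β)))).ne'
  have htrace (B : Matrix n n ℂ) : HasDerivAt
      (fun h : ℝ => (NormedSpace.exp ((-β) • (H + h • V)) * B).trace.re)
      (-β * (duhamel β H V B * (NormedSpace.exp ((-β) • H)).trace.re)) 0 := by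
    have hexp := hasDerivAt_trace_exp_add_smul ((-β) • H) ((-β) • V) B
    simp only [smul_comm _ (-β) V, ← smul_add] at hexp
    refine hexp.congr_deriv ?_
    simp only [duhamel, mul_smul_comm, smul_mul_assoc, Matrix.trace_smul, Complex.smul_re,
      smul_eq_mul, intervalIntegral.integral_const_mul, div_mul_cancel₀ _ hZ]
  have hquot := (htrace A).div (htrace 1) (by simpa using hZ)
  refine (hquot.congr_deriv ?_).congr_of_eventuallyEq (.of_forall fun h => ?_)
  · simp only [zero_smul, add_zero, mul_one, duhamel_one_right hH, gibbs_eq_re_div_re hH]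
    field
  · simp [gibbs_eq_re_div_re (hH.add (hV.smul (.all h)))]

end Gibbs

section FalkBruch

open scoped Matrix.Norms.L2Operator MatrixOrder

lemma trace_mul_lie_lie {n : Type*} [Fintype n] {E X : Matrix n n ℂ} (hEX : Commute E X)
    (A : Matrix n n ℂ) :
    (E * ⁅A, ⁅A, X⁆⁆).trace = 2 * (E * X * A * A).trace - 2 * (E * A * X * A).trace := by
  have hcycle : (E * A * A * X).trace = (E * X * A * A).trace := by
    rw [Matrix.trace_mul_comm, ← mul_assoc, ← mul_assoc, hEX.eq]
  have hexpand : E * ⁅A, ⁅A, X⁆⁆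
      = E * A * A * X + E * X * A * A - E * A * X * A - E * A * X * A := by
    simp only [Ring.lie_def]
    noncomm_ring
  rw [hexpand, Matrix.trace_sub, Matrix.trace_sub, Matrix.trace_add, hcycle]
  ring

variable {n : Type*} [Fintype n] [DecidableEq n] {H A : Matrix n n ℂ}

theorem exists_trace_cfc_eq_sum {X : Matrix n n ℂ} (hX : X.IsHermitian) (hA : A.IsHermitian) :
    ∃ (x : n → ℝ) (w : n → n → ℝ), (∀ k l, 0 ≤ w k l) ∧ (∀ k l, w k l = w l k) ∧
      ∀ f g : ℝ → ℝ, (cfc f X * A * cfc g X * A).trace.re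
        = ∑ k, ∑ l, w k l * (f (x k) * g (x l)) := by
  let U := (hX.eigenvectorUnitary : Matrix n n ℂ)
  let B := star U * A * U
  have hB (k l : n) : B l k = star (B k l) :=
    ((Matrix.isHermitian_conjTranspose_mul_mul U hA).apply l k).symm
  refine ⟨hX.eigenvalues, fun k l => Complex.normSq (B k l), fun k l => Complex.normSq_nonneg _,
    fun k l => by simp [hB k l], fun f g => ?_⟩
  have hcfc (f : ℝ → ℝ) :
      cfc f X = U * Matrix.diagonal (fun k => (f (hX.eigenvalues k) : ℂ)) * star U := by
    rw [hX.cfc_eq, Matrix.IsHermitian.cfc, Unitary.conjStarAlgAut_apply]; rfl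
  have hcycle (D E : Matrix n n ℂ) :
      (U * D * star U * A * (U * E * star U) * A).trace = (D * B * E * B).trace := by
    simp only [mul_assoc]
    rw [Matrix.trace_mul_comm]
    simp only [B, mul_assoc]
  rw [hcfc, hcfc, hcycle]
  simp only [Matrix.trace, Matrix.diag_apply, Matrix.mul_apply (M := _ * _ * _),
    Matrix.mul_diagonal, Matrix.diagonal_mul, Complex.re_sum]
  refine Finset.sum_congr rfl fun k _ => Finset.sum_congr rfl fun l _ => ?_
  rw [hB k l, Complex.normSq_apply]
  simp only [RCLike.star_def, Complex.mul_re, Complex.mul_im, Complex.ofReal_re, Complex.ofReal_im,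
    Complex.conj_re, Complex.conj_im]
  ring

lemma trace_exp_mul_lie_lie {X : Matrix n n ℂ} (hX : X.IsHermitian) (A : Matrix n n ℂ) :
    (NormedSpace.exp X * ⁅A, ⁅A, X⁆⁆).trace.re
      = 2 * (cfc (fun y => Real.exp y * y) X * A * cfc (fun _ => (1 : ℝ)) X * A).trace.re
        - 2 * (cfc Real.exp X * A * cfc (fun y : ℝ => y) X * A).trace.re := by
  have hXself : IsSelfAdjoint X := hX
  rw [trace_mul_lie_lie (Commute.refl X).exp_left, ← CFC.real_exp_eq_normedSpace_exp hXself,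
    cfc_mul Real.exp (fun y => y) X (by fun_prop) (by fun_prop), cfc_const_one ℝ X, cfc_id' ℝ X,
    mul_one]
  simp

lemma sum_sum_mul_eq_symm {ι : Type*} [Fintype ι] {w : ι → ι → ℝ} (hw : ∀ k l, w k l = w l k)
    (F : ι → ι → ℝ) :
    ∑ k, ∑ l, w k l * F k l = ∑ k, ∑ l, w k l * ((F k l + F l k) / 2) := by
  have hswap : ∑ k, ∑ l, w k l * F k l = ∑ k, ∑ l, w k l * F l k := by
    rw [Finset.sum_comm]
    exact Finset.sum_congr rfl fun k _ => Finset.sum_congr rfl fun l _ => by rw [hw]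
  simp only [mul_div_assoc', mul_add, add_div, Finset.sum_add_distrib, ← Finset.sum_div]
  rw [← hswap, add_halves]

lemma exp_smul_eq_cfc {X : Matrix n n ℂ} (hX : X.IsHermitian) (t : ℝ) :
    NormedSpace.exp (t • X) = cfc (fun y => Real.exp (t * y)) X := by
  have hXself : IsSelfAdjoint X := hX
  rw [cfc_comp_const_mul t Real.exp X,
    CFC.real_exp_eq_normedSpace_exp ((IsSelfAdjoint.all t).smul hXself)]

theorem exists_spectral_representation (hH : H.IsHermitian) (hA : A.IsHermitian) (β : ℝ) :
    ∃ (x : n → ℝ) (w : n → n → ℝ), (∀ k l, 0 ≤ w k l) ∧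
      gibbs β H (A * A) = ∑ k, ∑ l, w k l * ((Real.exp (x k) + Real.exp (x l)) / 2) ∧
      β * gibbs β H ⁅A, ⁅H, A⁆⁆
        = ∑ k, ∑ l, w k l * ((x k - x l) * (Real.exp (x k) - Real.exp (x l))) ∧
      duhamel β H A A = ∑ k, ∑ l, w k l * expLogMean (x k) (x l) := by
  let X := (-β) • H
  have hX : X.IsHermitian := hH.smul (.all _)
  obtain ⟨x, w, hw, hsymm, htrace⟩ := exists_trace_cfc_eq_sum hX hA
  refine ⟨x, fun k l => w k l / (NormedSpace.exp X).trace.re, fun k l => div_nonneg (hw k l)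
    (Complex.le_def.mp (trace_exp_nonneg hX)).1, ?_, ?_, ?_⟩ <;>
    simp only [div_mul_eq_mul_div, ← Finset.sum_div]
  · rw [gibbs_eq_re_div_re hH]
    congr 1
    calc (NormedSpace.exp X * (A * A)).trace.re
        = (cfc Real.exp X * A * cfc (fun _ => (1 : ℝ)) X * A).trace.re := by
          rw [← CFC.real_exp_eq_normedSpace_exp hX, cfc_const_one ℝ X, mul_one, mul_assoc]
      _ = _ := by
          rw [htrace, sum_sum_mul_eq_symm hsymm]
          simp only [mul_one]
  · have hlie : β • ⁅A, ⁅H, A⁆⁆ = ⁅A, ⁅A, X⁆⁆ := by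
      simp only [X, Ring.lie_def, mul_sub, sub_mul, smul_sub, mul_smul_comm, smul_mul_assoc,
        mul_assoc]
      module
    rw [← smul_eq_mul, ← (isLinearMap_gibbs β H).map_smul, gibbs_eq_re_div_re hH, hlie]
    congr 1
    rw [trace_exp_mul_lie_lie hX, htrace, htrace,
      sum_sum_mul_eq_symm hsymm, sum_sum_mul_eq_symm hsymm fun k l => Real.exp (x k) * x l]
    simp only [Finset.mul_sum, ← Finset.sum_sub_distrib]
    refine Finset.sum_congr rfl fun k _ => Finset.sum_congr rfl fun l _ => ?_
    ring
  · rw [duhamel]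
    congr 1
    simp only [show (-β) • H = X from rfl, exp_smul_eq_cfc hX, htrace, ← Real.exp_add]
    rw [intervalIntegral.integral_finsetSum fun k _ =>
      Continuous.intervalIntegrable (by fun_prop) _ _]
    refine Finset.sum_congr rfl fun k _ => ?_
    rw [intervalIntegral.integral_finsetSum fun l _ =>
      Continuous.intervalIntegrable (by fun_prop) _ _]
    exact Finset.sum_congr rfl fun l _ => intervalIntegral.integral_const_mul _ _

theorem mul_gibbs_lie_lie_nonneg (hH : H.IsHermitian) (hA : A.IsHermitian) (β : ℝ) :
    0 ≤ β * gibbs β H ⁅A, ⁅H, A⁆⁆ := by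
  obtain ⟨x, w, hw, -, hcomm, -⟩ := exists_spectral_representation hH hA β
  rw [hcomm]
  exact Finset.sum_nonneg fun k _ => Finset.sum_nonneg fun l _ => mul_nonneg (hw k l)
    ((monotone_id.monovary Real.exp_monotone).sub_mul_sub_nonneg _ _)

theorem duhamel_self_nonneg (hH : H.IsHermitian) (hA : A.IsHermitian) (β : ℝ) :
    0 ≤ duhamel β H A A := by
  obtain ⟨x, w, hw, -, -, hduhamel⟩ := exists_spectral_representation hH hA β
  rw [hduhamel]
  exact Finset.sum_nonneg fun k _ => Finset.sum_nonneg fun l _ =>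
    mul_nonneg (hw k l) (expLogMean_nonneg _ _)

theorem duhamel_self_le_gibbs_mul_self (hH : H.IsHermitian) (hA : A.IsHermitian) (β : ℝ) :
    duhamel β H A A ≤ gibbs β H (A * A) := by
  obtain ⟨x, w, hw, hsq, -, hduhamel⟩ := exists_spectral_representation hH hA β
  rw [hsq, hduhamel]
  gcongr with k _ l _
  · exact hw k l
  · exact expLogMean_le _ _

theorem IsFalkBruchMinorant.le_duhamel {C m : ℝ} (hCm : IsFalkBruchMinorant C m)
    (hH : H.IsHermitian) (hA : A.IsHermitian) (β : ℝ) :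
    C * gibbs β H (A * A) - m * (β * gibbs β H ⁅A, ⁅H, A⁆⁆ / 4) ≤ duhamel β H A A := by
  obtain ⟨x, w, hw, hsq, hcomm, hduhamel⟩ := exists_spectral_representation hH hA β
  rw [hsq, hcomm, hduhamel]
  simp only [Finset.mul_sum, Finset.sum_div, ← Finset.sum_sub_distrib]
  gcongr with k _ l _
  calc _ = w k l * (C * ((Real.exp (x k) + Real.exp (x l)) / 2)
          - m * ((x k - x l) * (Real.exp (x k) - Real.exp (x l)) / 4)) := by ring
    _ ≤ _ := mul_le_mul_of_nonneg_left (hCm.le_expLogMean _ _) (hw k l)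

end FalkBruch

section ProductMeasure

variable {ι : Type*} [Fintype ι]

theorem measurePreserving_update [DecidableEq ι] {α : ι → Type*} [∀ i, MeasurableSpace (α i)]
    (ν : ∀ i, Measure (α i)) [∀ i, IsProbabilityMeasure (ν i)] (i : ι) :
    MeasurePreserving (fun q : (∀ j, α j) × α i => Function.update q.1 i q.2)
      ((Measure.pi ν).prod (ν i)) (Measure.pi ν) := by
  have hmeas : Measurable (fun q : (∀ j, α j) × α i => Function.update q.1 i q.2) := by
    refine measurable_pi_iff.mpr fun j => ?_
    rcases eq_or_ne j i with rfl | hj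
    · simpa using measurable_snd
    · simp only [Function.update_of_ne hj]
      fun_prop
  refine ⟨hmeas, (Measure.pi_eq fun s hs => ?_).symm⟩
  have hpre : (fun q : (∀ j, α j) × α i => Function.update q.1 i q.2) ⁻¹' Set.univ.pi s
      = Set.univ.pi (Function.update s i Set.univ) ×ˢ s i := by
    ext ⟨x, y⟩
    simp only [Set.mem_preimage, Set.mem_univ_pi, Set.mem_prod]
    rw [Function.forall_update_iff x fun j a => a ∈ s j,
      Function.forall_update_iff s fun j a => x j ∈ a]
    simp [and_comm]
  rw [Measure.map_apply hmeas (MeasurableSet.univ_pi hs), hpre, Measure.prod_prod, Measure.pi_pi,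
    ← Finset.prod_erase_mul _ _ (Finset.mem_univ i),
    ← Finset.prod_erase_mul _ _ (Finset.mem_univ i)]
  simp only [Function.update_self, measure_univ, mul_one]
  congr 1
  refine Finset.prod_congr rfl fun j hj => ?_
  rw [Function.update_of_ne (Finset.ne_of_mem_erase hj)]

theorem integral_pi_comp_equiv {α : Type*} [MeasurableSpace α] (ν : Measure α) [SigmaFinite ν]
    (e : ι ≃ ι) (F : (ι → α) → ℝ) :
    ∫ x, F (fun i => x (e i)) ∂(Measure.pi fun _ => ν) = ∫ x, F x ∂(Measure.pi fun _ => ν) := by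
  have hcomp (x : ι → α) :
      MeasurableEquiv.piCongrLeft (fun _ => α) e.symm x = fun i => x (e i) := funext fun i => by
    simpa [MeasurableEquiv.coe_piCongrLeft] using
      Equiv.piCongrLeft_apply_apply (fun _ => α) e.symm x (e i)
  simpa only [hcomp] using (measurePreserving_piCongrLeft (fun _ => ν) e.symm).integral_comp' F

theorem integral_pi_eq_integral_update [DecidableEq ι] {α : ι → Type*} [∀ i, MeasurableSpace (α i)]
    (ν : ∀ i, Measure (α i)) [∀ i, IsProbabilityMeasure (ν i)] (i : ι) {F : (∀ j, α j) → ℝ}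
    (hF : Integrable F (Measure.pi ν)) :
    ∫ x, F x ∂Measure.pi ν = ∫ x, ∫ y, F (Function.update x i y) ∂ν i ∂Measure.pi ν := by
  have hupdate := measurePreserving_update ν i
  have hFmap : AEStronglyMeasurable F
      (((Measure.pi ν).prod (ν i)).map fun q => Function.update q.1 i q.2) :=
    hupdate.map_eq.symm ▸ hF.aestronglyMeasurable
  calc ∫ x, F x ∂Measure.pi ν
      = ∫ q, F (Function.update q.1 i q.2) ∂(Measure.pi ν).prod (ν i) := by
        rw [← integral_map hupdate.aemeasurable hFmap, hupdate.map_eq]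
    _ = _ := integral_prod _ (hupdate.integrable_comp_of_integrable hF)

end ProductMeasure

section GaussianIntegrationByParts

open scoped NNReal

lemma hasDerivAt_gaussianPDFReal (m : ℝ) (v : ℝ≥0) (x : ℝ) :
    HasDerivAt (gaussianPDFReal m v) (-((x - m) / v) * gaussianPDFReal m v x) x := by
  have hexponent : HasDerivAt (fun x : ℝ => -(x - m) ^ 2 / (2 * v)) (-((x - m) / v)) x :=
    ((((hasDerivAt_id x).sub_const m).pow 2).neg.div_const _).congr_deriv (by push_cast [id]; field)
  exact (hexponent.exp.const_mul _).congr_deriv (by rw [gaussianPDFReal]; ring)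

lemma integrable_gaussianReal_iff {m : ℝ} {v : ℝ≥0} (hv : v ≠ 0) {f : ℝ → ℝ} :
    Integrable f (gaussianReal m v) ↔ Integrable fun x => gaussianPDFReal m v x * f x := by
  rw [gaussianReal_of_var_ne_zero m hv, integrable_withDensity_iff_integrable_smul'
    (measurable_gaussianPDF m v) (ae_of_all _ fun _ => gaussianPDF_lt_top)]
  simp [toReal_gaussianPDF]

theorem integral_sub_mul_gaussianReal (m : ℝ) (v : ℝ≥0) {f f' : ℝ → ℝ}
    (hderiv : ∀ x, HasDerivAt f (f' x) x) (hf : Integrable f (gaussianReal m v))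
    (hf' : Integrable f' (gaussianReal m v))
    (hxf : Integrable (fun x => (x - m) * f x) (gaussianReal m v)) :
    ∫ x, (x - m) * f x ∂gaussianReal m v = v * ∫ x, f' x ∂gaussianReal m v := by
  rcases eq_or_ne v 0 with rfl | hv
  · simp
  rw [integrable_gaussianReal_iff hv] at hf hf' hxf
  have hv' : (v : ℝ) ≠ 0 := NNReal.coe_ne_zero.mpr hv
  have hparts := integral_mul_deriv_eq_deriv_mul_of_integrable
    (fun x _ => hasDerivAt_gaussianPDFReal m v x) (fun x _ => hderiv x) hf'
    ((hxf.const_mul (-(v : ℝ)⁻¹)).congr (ae_of_all _ fun x => by simp only [Pi.mul_apply]; ring)) hf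
  rw [integral_gaussianReal_eq_integral_smul hv, integral_gaussianReal_eq_integral_smul hv]
  simp only [smul_eq_mul]
  rw [hparts, ← integral_neg, ← integral_const_mul]
  congr with x
  field

theorem integral_sub_mul_pi_gaussianReal {ι : Type*} [Fintype ι] [DecidableEq ι] (m : ι → ℝ)
    (v : ι → ℝ≥0) (i : ι) {F F' : (ι → ℝ) → ℝ}
    (hderiv : ∀ x, HasDerivAt (fun y => F (Function.update x i y)) (F' x) (x i))
    (hF : Integrable F (Measure.pi fun j => gaussianReal (m j) (v j)))
    (hF' : Integrable F' (Measure.pi fun j => gaussianReal (m j) (v j)))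
    (hxF : Integrable (fun x => (x i - m i) * F x) (Measure.pi fun j => gaussianReal (m j) (v j))) :
    ∫ x, (x i - m i) * F x ∂(Measure.pi fun j => gaussianReal (m j) (v j))
      = v i * ∫ x, F' x ∂(Measure.pi fun j => gaussianReal (m j) (v j)) := by
  have hsection {G : (ι → ℝ) → ℝ}
      (hG : Integrable G (Measure.pi fun j => gaussianReal (m j) (v j))) :
      ∀ᵐ x ∂(Measure.pi fun j => gaussianReal (m j) (v j)),
        Integrable (fun y => G (Function.update x i y)) (gaussianReal (m i) (v i)) :=
    ((measurePreserving_update _ i).integrable_comp_of_integrable hG).prod_right_ae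
  rw [integral_pi_eq_integral_update _ i hxF, integral_pi_eq_integral_update _ i hF',
    ← integral_const_mul]
  refine integral_congr_ae ?_
  filter_upwards [hsection hF, hsection hF', hsection hxF] with x hFx hF'x hxFx
  simp only [Function.update_self] at hxFx ⊢
  exact integral_sub_mul_gaussianReal _ _
    (fun y => by simpa using hderiv (Function.update x i y)) hFx hF'x hxFx

end GaussianIntegrationByParts

section RandomHamiltonian

open scoped Matrix.Norms.L2Operator

variable {n : Type*} [Fintype n] [DecidableEq n]

section Continuity

variable [Nonempty n] {E : Type*} [TopologicalSpace E] {H : E → Matrix n n ℂ} {A : Matrix n n ℂ}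

lemma continuous_gibbs (hH : Continuous H) (hherm : ∀ x, (H x).IsHermitian) (β : ℝ)
    (A : Matrix n n ℂ) : Continuous fun x => gibbs β (H x) A := by
  simp only [gibbs_eq_re_div_re (hherm _)]
  exact .div (by fun_prop) (by fun_prop) fun x => (trace_exp_re_pos ((hherm x).smul (.all _))).ne'

lemma continuous_duhamel (hH : Continuous H) (hherm : ∀ x, (H x).IsHermitian) (β : ℝ)
    (A B : Matrix n n ℂ) : Continuous fun x => duhamel β (H x) A B := by
  refine .div ?_ (by fun_prop) fun x => (trace_exp_re_pos ((hherm x).smul (.all _))).ne'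
  exact intervalIntegral.continuous_parametric_intervalIntegral_of_continuous' (by fun_prop) 0 1

variable [MeasurableSpace E] [OpensMeasurableSpace E] (ν : Measure E) [IsFiniteMeasure ν]

lemma integrable_gibbs (hH : Continuous H) (hherm : ∀ x, (H x).IsHermitian) (β : ℝ)
    (hA : A.IsHermitian) : Integrable (fun x => gibbs β (H x) A) ν :=
  .of_bound (continuous_gibbs hH hherm β A).aestronglyMeasurable ‖A‖
    (ae_of_all _ fun x => abs_gibbs_le_norm (hherm x) β hA)

lemma integrable_gibbs_sq (hH : Continuous H) (hherm : ∀ x, (H x).IsHermitian) (β : ℝ)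
    (hA : A.IsHermitian) : Integrable (fun x => gibbs β (H x) A ^ 2) ν :=
  .of_bound ((continuous_gibbs hH hherm β A).pow 2).aestronglyMeasurable (‖A‖ ^ 2)
    (ae_of_all _ fun x => by
      rw [norm_pow]
      exact pow_le_pow_left₀ (norm_nonneg _) (abs_gibbs_le_norm (hherm x) β hA) 2)

lemma integrable_duhamel_self (hH : Continuous H) (hherm : ∀ x, (H x).IsHermitian) (β : ℝ)
    (hA : A.IsHermitian) : Integrable (fun x => duhamel β (H x) A A) ν := by
  have hsq : (A * A).IsHermitian := by rw [Matrix.IsHermitian, conjTranspose_mul, hA.eq]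
  refine .mono' (integrable_gibbs ν hH hherm β hsq)
    (continuous_duhamel hH hherm β A A).aestronglyMeasurable (ae_of_all _ fun x => ?_)
  rw [Real.norm_of_nonneg (duhamel_self_nonneg (hherm x) hA β)]
  exact duhamel_self_le_gibbs_mul_self (hherm x) hA β

end Continuity

theorem falkBruch_le_integral_duhamel [Nonempty n] {Ω : Type*} [MeasurableSpace Ω] {ν : Measure Ω}
    [IsProbabilityMeasure ν] {Φ : ℝ → ℝ}
    (hΦ : ∀ r : ℝ, 0 < r → Φ (r * Real.tanh r) = Real.tanh r / r) (hΦ0 : Φ 0 = 1)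
    {H : Ω → Matrix n n ℂ} (hherm : ∀ ω, (H ω).IsHermitian) {A : Matrix n n ℂ}
    (hA : A.IsHermitian) (hA2 : A * A = 1) {β : ℝ}
    (hlie : Integrable (fun ω => gibbs β (H ω) ⁅A, ⁅H ω, A⁆⁆) ν)
    (hduhamel : Integrable (fun ω => duhamel β (H ω) A A) ν) :
    Φ (β / 4 * ∫ ω, gibbs β (H ω) ⁅A, ⁅H ω, A⁆⁆ ∂ν) ≤ ∫ ω, duhamel β (H ω) A A ∂ν := by
  have hnonneg : 0 ≤ β / 4 * ∫ ω, gibbs β (H ω) ⁅A, ⁅H ω, A⁆⁆ ∂ν := by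
    rw [← integral_const_mul]
    refine integral_nonneg fun ω => ?_
    have := mul_gibbs_lie_lie_nonneg (hherm ω) hA β
    rw [Pi.zero_apply]
    linarith
  obtain ⟨C, m, hCm, hΦCm⟩ := exists_isFalkBruchMinorant hΦ hΦ0 hnonneg
  have hpointwise (ω : Ω) : C - m * (β / 4 * gibbs β (H ω) ⁅A, ⁅H ω, A⁆⁆)
      ≤ duhamel β (H ω) A A := by
    have := hCm.le_duhamel (hherm ω) hA β
    rw [hA2, gibbs_one (hherm ω)] at this
    linarith
  calc _ = ∫ ω, C - m * (β / 4 * gibbs β (H ω) ⁅A, ⁅H ω, A⁆⁆) ∂ν := by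
        rw [hΦCm, integral_sub (integrable_const C) ((hlie.const_mul _).const_mul _),
          integral_const_mul, integral_const_mul]
        simp
    _ ≤ _ := integral_mono ((integrable_const C).sub ((hlie.const_mul _).const_mul _)) hduhamel
        hpointwise

end RandomHamiltonian

section GaussianCouplings

variable {ι : Type*} [Fintype ι]

/-- The law of a family of independent standard Gaussian couplings. -/
abbrev stdGaussianPi (ι : Type*) [Fintype ι] : Measure (ι → ℝ) :=
  Measure.pi fun _ => gaussianReal 0 1

theorem integral_comp_eq_integral_stdGaussianPi {Ω : Type*} [MeasurableSpace Ω] {μ : Measure Ω}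
    [IsProbabilityMeasure μ] {X : ι → Ω → ℝ} (hX : ∀ i, μ.map (X i) = gaussianReal 0 1)
    (hindep : iIndepFun X μ) {F : (ι → ℝ) → ℝ} (hF : Continuous F) :
    ∫ ω, F (fun i => X i ω) ∂μ = ∫ x, F x ∂stdGaussianPi ι := by
  have hmeas (i : ι) : AEMeasurable (X i) μ :=
    aemeasurable_of_map_neZero (hX i ▸ inferInstance)
  have hmap : μ.map (fun ω i => X i ω) = stdGaussianPi ι := by
    simp only [(iIndepFun_iff_map_fun_eq_pi_map hmeas).mp hindep, hX]
  rw [← hmap, integral_map (aemeasurable_pi_lambda _ hmeas) hF.aestronglyMeasurable]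

lemma integrable_mul_gibbs {n : Type*} [Fintype n] [DecidableEq n] [Nonempty n]
    {H : (ι → ℝ) → Matrix n n ℂ} (hH : Continuous H) (hherm : ∀ x, (H x).IsHermitian) (β : ℝ)
    {A : Matrix n n ℂ} (hA : A.IsHermitian) (i : ι) :
    Integrable (fun x => x i * gibbs β (H x) A) (stdGaussianPi ι) := by
  have hcoord : Integrable (fun x : ι → ℝ => x i) (stdGaussianPi ι) :=
    (measurePreserving_eval (fun _ => gaussianReal 0 1) i).integrable_comp_of_integrable
      ((memLp_id_gaussianReal 1).integrable le_rfl)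
  exact hcoord.mul_bdd (continuous_gibbs hH hherm β A).aestronglyMeasurable
    (ae_of_all _ fun x => abs_gibbs_le_norm (hherm x) β hA)

end GaussianCouplings

section DisorderedHamiltonian

variable {n ι : Type*} [Fintype ι] {H₀ : Matrix n n ℂ} {A : ι → Matrix n n ℂ}

/-- The Hamiltonian `H₀ + c Σ_i x_i A_i` with couplings `x`, random in the application. -/
def disorderedHamiltonian (H₀ : Matrix n n ℂ) (c : ℝ) (A : ι → Matrix n n ℂ) (x : ι → ℝ) :
    Matrix n n ℂ :=
  H₀ + c • ∑ i, x i • A i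

lemma continuous_disorderedHamiltonian (H₀ : Matrix n n ℂ) (c : ℝ) (A : ι → Matrix n n ℂ) :
    Continuous (disorderedHamiltonian H₀ c A) := by
  unfold disorderedHamiltonian
  fun_prop

lemma isHermitian_disorderedHamiltonian (hH₀ : H₀.IsHermitian) (c : ℝ)
    (hA : ∀ i, (A i).IsHermitian) (x : ι → ℝ) : (disorderedHamiltonian H₀ c A x).IsHermitian :=
  hH₀.add (.smul (isSelfAdjoint_sum _ fun i _ => (hA i).smul (.all (x i))) (.all c))

lemma disorderedHamiltonian_update [DecidableEq ι] (H₀ : Matrix n n ℂ) (c : ℝ)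
    (A : ι → Matrix n n ℂ) (x : ι → ℝ) (i : ι) (y : ℝ) :
    disorderedHamiltonian H₀ c A (Function.update x i y)
      = disorderedHamiltonian H₀ c A x + (c * (y - x i)) • A i := by
  have hsum : ∑ j ∈ Finset.univ.erase i, Function.update x i y j • A j
      = ∑ j ∈ Finset.univ.erase i, x j • A j :=
    Finset.sum_congr rfl fun j hj => by rw [Function.update_of_ne (Finset.ne_of_mem_erase hj)]
  rw [disorderedHamiltonian, disorderedHamiltonian,
    ← Finset.add_sum_erase _ _ (Finset.mem_univ i), hsum, Function.update_self,
    ← Finset.add_sum_erase _ (fun j => x j • A j) (Finset.mem_univ i)]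
  module

theorem integral_mul_gibbs_disorderedHamiltonian [Fintype n] [DecidableEq n] [Nonempty n]
    (hH₀ : H₀.IsHermitian) (c : ℝ) (hA : ∀ i, (A i).IsHermitian) (β : ℝ) (i : ι) :
    ∫ x, x i * gibbs β (disorderedHamiltonian H₀ c A x) (A i) ∂stdGaussianPi ι
      = -(β * c) * (∫ x, duhamel β (disorderedHamiltonian H₀ c A x) (A i) (A i) ∂stdGaussianPi ι
          - ∫ x, gibbs β (disorderedHamiltonian H₀ c A x) (A i) ^ 2 ∂stdGaussianPi ι) := by
  classical
  let H := disorderedHamiltonian H₀ c A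
  have hH : Continuous H := continuous_disorderedHamiltonian H₀ c A
  have hherm : ∀ x, (H x).IsHermitian := isHermitian_disorderedHamiltonian hH₀ c hA
  have hderiv (x : ι → ℝ) : HasDerivAt (fun y => gibbs β (H (Function.update x i y)) (A i))
      (-(β * c) * (duhamel β (H x) (A i) (A i) - gibbs β (H x) (A i) ^ 2)) (x i) := by
    have hcoupling : HasDerivAt (fun y => c * (y - x i)) c (x i) := by
      simpa using ((hasDerivAt_id (x i)).sub_const (x i)).const_mul c
    have hgibbs := hasDerivAt_gibbs (hherm x) (hA i) β (A i)
    rw [← show c * (x i - x i) = 0 by ring] at hgibbs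
    simp only [H, disorderedHamiltonian_update]
    have hcomp := HasDerivAt.comp (x i) hgibbs hcoupling
    exact hcomp.congr_deriv (by ring)
  have hintGibbs := integrable_gibbs (stdGaussianPi ι) hH hherm β (hA i)
  have hintDuhamel := integrable_duhamel_self (stdGaussianPi ι) hH hherm β (hA i)
  have hintSq := integrable_gibbs_sq (stdGaussianPi ι) hH hherm β (hA i)
  have hparts := integral_sub_mul_pi_gaussianReal (fun _ => 0) (fun _ => 1) i hderiv hintGibbs
    ((hintDuhamel.sub hintSq).const_mul _)
    (by simpa only [sub_zero] using integrable_mul_gibbs hH hherm β (hA i) i)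
  simpa only [sub_zero, NNReal.coe_one, one_mul, integral_const_mul,
    integral_sub' hintDuhamel hintSq] using hparts

end DisorderedHamiltonian

section SpinAlgebra

variable {N p : ℕ}

lemma isHermitian_SzProd (s : Finset (Fin N)) : (SzProd N s).IsHermitian := by
  rw [SzProd, Matrix.isHermitian_diagonal_iff]
  intro σ
  rw [isSelfAdjoint_iff, star_prod]
  exact Finset.prod_congr rfl fun j _ => by split_ifs <;> simp

lemma SzProd_mul_self (s : Finset (Fin N)) : SzProd N s * SzProd N s = 1 := by
  rw [SzProd, diagonal_mul_diagonal, ← diagonal_one]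
  congr with σ
  rw [← Finset.prod_mul_distrib]
  exact Finset.prod_eq_one fun j _ => by split_ifs <;> simp

lemma commute_SzProd (s t : Finset (Fin N)) : Commute (SzProd N s) (SzProd N t) :=
  Matrix.commute_diagonal _ _

lemma eq_update_flip_iff (j : Fin N) (σ τ : Conf N) :
    τ = Function.update σ j (1 - σ j) ↔ σ = Function.update τ j (1 - τ j) := by
  constructor <;> (rintro rfl; simp)

lemma isHermitian_Sx (j : Fin N) : (Sx N j).IsHermitian := by
  ext σ τ
  simp only [Sx, conjTranspose_apply, of_apply, eq_update_flip_iff j τ σ]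
  split_ifs <;> simp

lemma prod_update_flip (s : Finset (Fin N)) (j : Fin N) (σ : Conf N) :
    ∏ i ∈ s, (if Function.update σ j (1 - σ j) i = 0 then (1 : ℂ) else -1)
      = (if j ∈ s then -1 else 1) * ∏ i ∈ s, (if σ i = 0 then (1 : ℂ) else -1) := by
  have hflip : ∀ a : Fin 2, (if 1 - a = 0 then (1 : ℂ) else -1) = if a = 0 then -1 else 1 := by
    intro a
    fin_cases a <;> simp
  rw [← Finset.prod_ite_eq' s j fun _ => (-1 : ℂ), ← Finset.prod_mul_distrib]
  refine Finset.prod_congr rfl fun i _ => ?_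
  rcases eq_or_ne i j with rfl | hij
  · simpa using hflip (σ i)
  · simp [hij]

lemma SzProd_mul_Sx_mul_SzProd (s : Finset (Fin N)) (j : Fin N) :
    SzProd N s * Sx N j * SzProd N s = if j ∈ s then -Sx N j else Sx N j := by
  let sign (σ : Conf N) : ℂ := ∏ i ∈ s, if σ i = 0 then 1 else -1
  have hsign_sq (σ : Conf N) : sign σ * sign σ = 1 := by
    simpa [SzProd] using congr_fun₂ (SzProd_mul_self s) σ σ
  have hsign_flip (σ : Conf N) :
      sign (Function.update σ j (1 - σ j)) = (if j ∈ s then -1 else 1) * sign σ :=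
    prod_update_flip s j σ
  ext σ τ
  calc (SzProd N s * Sx N j * SzProd N s) σ τ = sign σ * Sx N j σ τ * sign τ := by
        simp [SzProd, sign, mul_diagonal, diagonal_mul]
    _ = (if j ∈ s then -1 else 1) * Sx N j σ τ := by
        by_cases hτ : τ = Function.update σ j (1 - σ j)
        · rw [hτ, hsign_flip]
          linear_combination (if j ∈ s then -1 else 1) * Sx N j σ _ * hsign_sq σ
        · simp [Sx, hτ]
    _ = _ := by split_ifs <;> simp

lemma lie_lie_of_mul_self_eq_one {R : Type*} [Ring R] {a : R} (ha : a * a = 1) (b : R) :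
    ⁅a, ⁅b, a⁆⁆ = 2 • (a * b * a - b) := by
  simp only [Ring.lie_def, mul_sub, sub_mul, mul_assoc, ha, mul_one]
  rw [← mul_assoc a a b, ha, one_mul]
  abel

lemma SzProd_mul_sum_Sx_mul_SzProd (s : Finset (Fin N)) :
    SzProd N s * (∑ j, Sx N j) * SzProd N s = ∑ j, Sx N j - (2 : ℝ) • ∑ j ∈ s, Sx N j := by
  have hterm (j : Fin N) : SzProd N s * Sx N j * SzProd N s
      = Sx N j - (2 : ℝ) • if j ∈ s then Sx N j else 0 := by
    rw [SzProd_mul_Sx_mul_SzProd]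
    split_ifs <;> module
  rw [Finset.mul_sum, Finset.sum_mul]
  simp only [hterm, Finset.sum_sub_distrib, ← Finset.smul_sum, Finset.sum_ite_mem,
    Finset.univ_inter]

/-- The index sets of the `p`-spin couplings. -/
abbrev Interaction (N p : ℕ) := {s : Finset (Fin N) // s.card = p}

/-- The normalization `√(p!/(2N^{p-1}))` of the `p`-spin couplings. -/
def pSpinScale (N p : ℕ) : ℝ := √((Nat.factorial p : ℝ) / (2 * (N : ℝ) ^ (p - 1)))

/-- The transverse `p`-spin Hamiltonian `HNp` as a function of the couplings that it depends on. -/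
def pSpinHamiltonian (N p : ℕ) (J b : ℝ) : (Interaction N p → ℝ) → Matrix (Conf N) (Conf N) ℂ :=
  disorderedHamiltonian (-(b • ∑ j, Sx N j)) (-(J * pSpinScale N p)) fun s => SzProd N s

/-- The zero-field Hamiltonian `UNp` as a function of the couplings that it depends on. -/
def pSpinEnergy (N p : ℕ) (x : Interaction N p → ℝ) : Matrix (Conf N) (Conf N) ℂ :=
  (-pSpinScale N p) • ∑ s, x s • SzProd N s

lemma UNp_eq_pSpinEnergy (g : Finset (Fin N) → ℝ) : UNp N p g = pSpinEnergy N p fun s => g s := by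
  rw [UNp, pSpinEnergy, pSpinScale, ← Finset.sum_filter,
    Finset.sum_subtype (p := fun s => s.card = p) _ (by simp)]

lemma HNp_eq_pSpinHamiltonian (J b : ℝ) (g : Finset (Fin N) → ℝ) :
    HNp N p J b g = pSpinHamiltonian N p J b fun s => g s := by
  rw [HNp, UNp_eq_pSpinEnergy, pSpinEnergy, pSpinHamiltonian, disorderedHamiltonian]
  module

lemma continuous_pSpinHamiltonian (N p : ℕ) (J b : ℝ) : Continuous (pSpinHamiltonian N p J b) :=
  continuous_disorderedHamiltonian _ _ _

lemma isHermitian_transverseField (b : ℝ) : (-(b • ∑ j, Sx N j)).IsHermitian :=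
  (Matrix.IsHermitian.smul (isSelfAdjoint_sum _ fun j _ => isHermitian_Sx j) (.all b)).neg

lemma isHermitian_pSpinHamiltonian (J b : ℝ) (x : Interaction N p → ℝ) :
    (pSpinHamiltonian N p J b x).IsHermitian :=
  isHermitian_disorderedHamiltonian (isHermitian_transverseField b) (-(J * pSpinScale N p))
    (A := fun s : Interaction N p => SzProd N s) (fun s => isHermitian_SzProd s.1) x

theorem SzProd_lie_lie_pSpinHamiltonian (J b : ℝ) (x : Interaction N p → ℝ) (s : Finset (Fin N)) :
    ⁅SzProd N s, ⁅pSpinHamiltonian N p J b x, SzProd N s⁆⁆ = (4 * b) • ∑ j ∈ s, Sx N j := by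
  have hclassical : Commute (SzProd N s) (∑ t : Interaction N p, x t • SzProd N t) :=
    .sum_right _ _ _ fun t _ => (commute_SzProd s t.1).smul_right _
  have hconj : SzProd N s * pSpinHamiltonian N p J b x * SzProd N s
      = pSpinHamiltonian N p J b x + (2 * b) • ∑ j ∈ s, Sx N j := by
    simp only [pSpinHamiltonian, disorderedHamiltonian, mul_add, add_mul, mul_neg, neg_mul,
      mul_smul_comm, smul_mul_assoc, SzProd_mul_sum_Sx_mul_SzProd, hclassical.eq]
    rw [mul_assoc _ (SzProd N s), SzProd_mul_self, mul_one]
    module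
  rw [lie_lie_of_mul_self_eq_one (SzProd_mul_self s), hconj]
  module

end SpinAlgebra

section SpinPermutation

variable {N p : ℕ}

/-- The relabelling of the spins by `π`, which carries the `j`-th spin to the `π j`-th. -/
def permuteSpins (π : Equiv.Perm (Fin N)) :
    Matrix (Conf N) (Conf N) ℂ ≃ₐ[ℂ] Matrix (Conf N) (Conf N) ℂ :=
  Matrix.reindexAlgEquiv ℂ ℂ (π.arrowCongr (Equiv.refl _))

/-- The action of spin permutations on the index sets of the couplings. -/
def permuteInteraction (π : Equiv.Perm (Fin N)) : Equiv.Perm (Interaction N p) :=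
  π.finsetCongr.subtypeEquiv fun s => by simp

lemma permuteSpins_apply (π : Equiv.Perm (Fin N)) (A : Matrix (Conf N) (Conf N) ℂ) (σ τ : Conf N) :
    permuteSpins π A σ τ = A (σ ∘ π) (τ ∘ π) :=
  rfl

lemma permuteSpins_SzProd (π : Equiv.Perm (Fin N)) (s : Finset (Fin N)) :
    permuteSpins π (SzProd N s) = SzProd N (s.map π.toEmbedding) := by
  ext σ τ
  simp [permuteSpins_apply, SzProd, diagonal_apply, π.surjective.injective_comp_right.eq_iff]

lemma permuteSpins_Sx (π : Equiv.Perm (Fin N)) (j : Fin N) :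
    permuteSpins π (Sx N j) = Sx N (π j) := by
  ext σ τ
  have hflip : Function.update (σ ∘ π) j (1 - σ (π j))
      = Function.update σ (π j) (1 - σ (π j)) ∘ π :=
    (Function.update_comp_eq_of_injective σ π.injective j _).symm
  simp only [permuteSpins_apply, Sx, of_apply, Function.comp_apply, hflip,
    π.surjective.injective_comp_right.eq_iff]

lemma permuteSpins_pSpinHamiltonian (π : Equiv.Perm (Fin N)) (J b : ℝ)
    (x : Interaction N p → ℝ) :
    permuteSpins π (pSpinHamiltonian N p J b fun s => x (permuteInteraction π s))
      = pSpinHamiltonian N p J b x := by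
  have hclassical : ∑ s : Interaction N p,
      x (permuteInteraction π s) • permuteSpins π (SzProd N s) = ∑ s, x s • SzProd N s := by
    simp only [permuteSpins_SzProd]
    exact Equiv.sum_comp (permuteInteraction π) fun s => x s • SzProd N s
  have hfield : ∑ j, permuteSpins π (Sx N j) = ∑ j, Sx N j := by
    simp only [permuteSpins_Sx, Equiv.sum_comp π (Sx N)]
  have hsmul (c : ℝ) (A : Matrix (Conf N) (Conf N) ℂ) :
      permuteSpins π (c • A) = c • permuteSpins π A :=
    rfl
  simp only [pSpinHamiltonian, disorderedHamiltonian, map_add, map_neg, map_sum, hsmul, hclassical,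
    hfield]

lemma gibbs_pSpinHamiltonian_permuteInteraction (π : Equiv.Perm (Fin N)) (β J b : ℝ)
    (x : Interaction N p → ℝ) (A : Matrix (Conf N) (Conf N) ℂ) :
    gibbs β (pSpinHamiltonian N p J b fun s => x (permuteInteraction π s)) A
      = gibbs β (pSpinHamiltonian N p J b x) (permuteSpins π A) := by
  rw [← gibbs_map (permuteSpins π), permuteSpins_pSpinHamiltonian]

theorem integral_gibbs_Sx_eq (β J b : ℝ) (i j : Fin N) :
    ∫ x, gibbs β (pSpinHamiltonian N p J b x) (Sx N i) ∂stdGaussianPi (Interaction N p)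
      = ∫ x, gibbs β (pSpinHamiltonian N p J b x) (Sx N j) ∂stdGaussianPi (Interaction N p) := by
  rw [← integral_pi_comp_equiv _ (permuteInteraction (Equiv.swap i j))]
  simp only [gibbs_pSpinHamiltonian_permuteInteraction, permuteSpins_Sx, Equiv.swap_apply_left]

lemma exists_permuteInteraction_eq (s t : Interaction N p) :
    ∃ π : Equiv.Perm (Fin N), permuteInteraction π s = t := by
  let e : s.1 ≃ t.1 := Finset.equivOfCardEq (s.2.trans t.2.symm)
  refine ⟨e.extendSubtype, Subtype.ext (Finset.eq_of_subset_of_card_le (fun i hi => ?_) ?_)⟩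
  · obtain ⟨j, hj, rfl⟩ := Finset.mem_map.mp hi
    exact e.extendSubtype_mem j hj
  · simp [permuteInteraction, s.2, t.2]

theorem integral_mul_gibbs_SzProd_eq (β J b : ℝ) (s t : Interaction N p) :
    ∫ x, x s * gibbs β (pSpinHamiltonian N p J b x) (SzProd N s) ∂stdGaussianPi (Interaction N p)
      = ∫ x, x t * gibbs β (pSpinHamiltonian N p J b x) (SzProd N t)
          ∂stdGaussianPi (Interaction N p) := by
  obtain ⟨π, rfl⟩ := exists_permuteInteraction_eq s t
  rw [← integral_pi_comp_equiv _ (permuteInteraction π)]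
  simp only [gibbs_pSpinHamiltonian_permuteInteraction, permuteSpins_SzProd]
  rfl

end SpinPermutation

section PSpin

variable {N p : ℕ}

theorem falkBruch_pSpin {Φ : ℝ → ℝ}
    (hΦ : ∀ r : ℝ, 0 < r → Φ (r * Real.tanh r) = Real.tanh r / r) (hΦ0 : Φ 0 = 1)
    (β J b : ℝ) (s : Interaction N p) (j : Fin N) :
    Φ (p * β * b * ∫ x, gibbs β (pSpinHamiltonian N p J b x) (Sx N j)
          ∂stdGaussianPi (Interaction N p))
      ≤ ∫ x, duhamel β (pSpinHamiltonian N p J b x) (SzProd N s) (SzProd N s)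
          ∂stdGaussianPi (Interaction N p) := by
  have hH := continuous_pSpinHamiltonian N p J b
  have hherm := isHermitian_pSpinHamiltonian (N := N) (p := p) J b
  have hintSx (i : Fin N) : Integrable (fun x => gibbs β (pSpinHamiltonian N p J b x) (Sx N i))
      (stdGaussianPi (Interaction N p)) :=
    integrable_gibbs _ hH hherm β (isHermitian_Sx i)
  have hlie (x : Interaction N p → ℝ) :
      gibbs β (pSpinHamiltonian N p J b x)
          ⁅SzProd N s, ⁅pSpinHamiltonian N p J b x, SzProd N s⁆⁆
        = 4 * b * ∑ i ∈ s.1, gibbs β (pSpinHamiltonian N p J b x) (Sx N i) := by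
    let L := (isLinearMap_gibbs β (pSpinHamiltonian N p J b x)).mk'
    rw [SzProd_lie_lie_pSpinHamiltonian]
    exact (map_smul L _ _).trans (congrArg _ (map_sum L _ _))
  have hlieInt := falkBruch_le_integral_duhamel hΦ hΦ0 hherm (isHermitian_SzProd s.1)
    (SzProd_mul_self s.1) (β := β)
    (by simpa only [hlie] using (integrable_finsetSum _ fun i _ => hintSx i).const_mul _)
    (integrable_duhamel_self (stdGaussianPi (Interaction N p)) hH hherm β (isHermitian_SzProd s.1))
  have hfield : β / 4 * ∫ x, gibbs β (pSpinHamiltonian N p J b x)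
        ⁅SzProd N s, ⁅pSpinHamiltonian N p J b x, SzProd N s⁆⁆ ∂stdGaussianPi (Interaction N p)
      = p * β * b * ∫ x, gibbs β (pSpinHamiltonian N p J b x) (Sx N j)
          ∂stdGaussianPi (Interaction N p) := by
    simp only [hlie, integral_const_mul, integral_finsetSum _ fun i _ => hintSx i,
      integral_gibbs_Sx_eq β J b _ j, Finset.sum_const, s.2, nsmul_eq_mul]
    ring
  rwa [hfield] at hlieInt

lemma pSpinScale_sq_mul_choose (hp : 0 < p) (hN : p ≤ N) :
    pSpinScale N p ^ 2 * N.choose p = N * alphaP N p / 2 := by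
  have hfactorial : (N.choose p : ℝ) * p.factorial * (N - p).factorial = N.factorial := by
    exact_mod_cast Nat.choose_mul_factorial_mul_factorial hN
  have hN0 : (N : ℝ) ≠ 0 := by exact_mod_cast (hp.trans_le hN).ne'
  obtain ⟨q, rfl⟩ := Nat.exists_eq_add_of_lt hp
  rw [pSpinScale, Real.sq_sqrt (by positivity), alphaP, ← hfactorial]
  simp only [zero_add, Nat.add_sub_cancel, pow_succ]
  field_simp

lemma gibbs_pSpinEnergy (β : ℝ) (H : Matrix (Conf N) (Conf N) ℂ) (x : Interaction N p → ℝ) :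
    gibbs β H (pSpinEnergy N p x) = -pSpinScale N p * ∑ s, x s * gibbs β H (SzProd N s) := by
  let L := (isLinearMap_gibbs β H).mk'
  have hlinear : L (pSpinEnergy N p x) = -pSpinScale N p * ∑ s, x s * L (SzProd N s) := by
    simp only [pSpinEnergy, map_smul, map_sum, smul_eq_mul]
  exact hlinear

theorem integral_gibbs_pSpinEnergy (β J b : ℝ) (s : Interaction N p) :
    ∫ x, gibbs β (pSpinHamiltonian N p J b x) (pSpinEnergy N p x) ∂stdGaussianPi (Interaction N p)
      = -(pSpinScale N p * N.choose p) * ∫ x, x s * gibbs β (pSpinHamiltonian N p J b x)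
          (SzProd N s) ∂stdGaussianPi (Interaction N p) := by
  have hint (t : Interaction N p) := integrable_mul_gibbs (continuous_pSpinHamiltonian N p J b)
    (isHermitian_pSpinHamiltonian J b) β (isHermitian_SzProd t.1) t
  simp only [gibbs_pSpinEnergy, integral_const_mul, integral_finsetSum _ fun t _ => hint t,
    integral_mul_gibbs_SzProd_eq β J b _ s, Finset.sum_const, Finset.card_univ,
    Fintype.card_finset_len, Fintype.card_fin, nsmul_eq_mul]
  ring

theorem integral_mul_gibbs_SzProd (β J b : ℝ) (s : Interaction N p) :
    ∫ x, x s * gibbs β (pSpinHamiltonian N p J b x) (SzProd N s) ∂stdGaussianPi (Interaction N p)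
      = β * J * pSpinScale N p
        * (∫ x, duhamel β (pSpinHamiltonian N p J b x) (SzProd N s) (SzProd N s)
            ∂stdGaussianPi (Interaction N p)
          - ∫ x, gibbs β (pSpinHamiltonian N p J b x) (SzProd N s) ^ 2
            ∂stdGaussianPi (Interaction N p)) := by
  have hparts := integral_mul_gibbs_disorderedHamiltonian (isHermitian_transverseField b)
    (-(J * pSpinScale N p)) (A := fun t : Interaction N p => SzProd N t)
    (fun t => isHermitian_SzProd t.1) β s
  rwa [mul_neg, neg_neg, ← mul_assoc] at hparts

theorem integral_gibbs_sq_SzProd (hp : 0 < p) {β J : ℝ} (hβ : β ≠ 0) (hJ : J ≠ 0) (b : ℝ)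
    (s : Interaction N p) :
    ∫ x, gibbs β (pSpinHamiltonian N p J b x) (SzProd N s) ^ 2 ∂stdGaussianPi (Interaction N p)
      = ∫ x, duhamel β (pSpinHamiltonian N p J b x) (SzProd N s) (SzProd N s)
          ∂stdGaussianPi (Interaction N p)
        + 2 / (β * J * N * alphaP N p) * ∫ x, gibbs β (pSpinHamiltonian N p J b x)
          (pSpinEnergy N p x) ∂stdGaussianPi (Interaction N p) := by
  have hN : p ≤ N := by simpa [s.2] using s.1.card_le_univ
  have hN0 : (N : ℝ) ≠ 0 := by exact_mod_cast (hp.trans_le hN).ne'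
  have halpha : alphaP N p ≠ 0 := by
    unfold alphaP
    positivity
  have hscale := pSpinScale_sq_mul_choose hp hN
  rw [integral_gibbs_pSpinEnergy β J b s, integral_mul_gibbs_SzProd]
  generalize ∫ x, gibbs β (pSpinHamiltonian N p J b x) (SzProd N s) ^ 2 ∂_ = Q
  generalize ∫ x, duhamel β (pSpinHamiltonian N p J b x) (SzProd N s) (SzProd N s) ∂_ = D
  field_simp
  linear_combination (2 * (D - Q)) * hscale

lemma card_firstP (hN : p ≤ N) : (firstP N p).card = p := by
  rw [firstP, Fin.card_filter_val_lt, min_eq_right hN]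

end PSpin

theorem stmt18_general
    {Ω : Type*} [MeasurableSpace Ω] (μ : Measure Ω) [IsProbabilityMeasure μ]
    (p N : ℕ) (hp : 0 < p)
    (β J b : ℝ) (hβ : β ≠ 0) (hJ : J ≠ 0)
    (g : Ω → Finset (Fin N) → ℝ)
    (hgauss : ∀ s : Finset (Fin N), s.card = p →
      Measure.map (fun ω => g ω s) μ = gaussianReal 0 1)
    (hindep : iIndepFun
      (fun (s : {t : Finset (Fin N) // t.card = p}) ω => g ω s.1) μ)
    (Φ : ℝ → ℝ) (hΦ : ∀ r : ℝ, 0 < r → Φ (r * Real.tanh r) = Real.tanh r / r)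
    (hΦ0 : Φ 0 = 1) (s : Finset (Fin N)) (hs : s.card = p) (j : Fin N) :
    Φ ((p : ℝ) * β * b * ∫ ω, gibbs β (HNp N p J b (g ω)) (Sx N j) ∂μ)
        + (2 / (β * J * (N : ℝ) * alphaP N p))
            * ∫ ω, gibbs β (HNp N p J b (g ω)) (UNp N p (g ω)) ∂μ
      ≤ ∫ ω, (gibbs β (HNp N p J b (g ω)) (SzProd N s)) ^ 2 ∂μ := by
  have hlaw {F : (Interaction N p → ℝ) → ℝ} (hF : Continuous F) :
      ∫ ω, F (fun t => g ω t) ∂μ = ∫ x, F x ∂stdGaussianPi (Interaction N p) :=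
    integral_comp_eq_integral_stdGaussianPi (fun t => hgauss t.1 t.2) hindep hF
  have hcont (A : Matrix (Conf N) (Conf N) ℂ) :
      Continuous fun x => gibbs β (pSpinHamiltonian N p J b x) A :=
    continuous_gibbs (continuous_pSpinHamiltonian N p J b) (isHermitian_pSpinHamiltonian J b) β A
  have hcontEnergy :
      Continuous fun x => gibbs β (pSpinHamiltonian N p J b x) (pSpinEnergy N p x) := by
    simp only [gibbs_pSpinEnergy]
    fun_prop
  have hcontSq : Continuous fun x => gibbs β (pSpinHamiltonian N p J b x) (SzProd N s) ^ 2 :=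
    (hcont _).pow 2
  simp only [HNp_eq_pSpinHamiltonian, UNp_eq_pSpinEnergy]
  rw [hlaw (hcont _), hlaw hcontEnergy, hlaw hcontSq,
    integral_gibbs_sq_SzProd hp hβ hJ b ⟨s, hs⟩]
  gcongr
  exact falkBruch_pSpin hΦ hΦ0 β J b ⟨s, hs⟩ j

theorem stmt18
    {Ω : Type*} [MeasurableSpace Ω] (μ : Measure Ω) [IsProbabilityMeasure μ]
    (p N : ℕ) (hp : 2 ≤ p) (hN : p ≤ N)
    (β J b : ℝ) (hβ : 0 < β) (hJ : 0 < J) (hb : 0 ≤ b)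
    (g : Ω → Finset (Fin N) → ℝ)
    (hmeas : ∀ s : Finset (Fin N), Measurable fun ω => g ω s)
    (hgauss : ∀ s : Finset (Fin N), s.card = p →
      Measure.map (fun ω => g ω s) μ = gaussianReal 0 1)
    (hindep : iIndepFun
      (fun (s : {t : Finset (Fin N) // t.card = p}) ω => g ω s.1) μ)
    (Φ : ℝ → ℝ) (hΦ : ∀ r : ℝ, 0 < r → Φ (r * Real.tanh r) = Real.tanh r / r)
    (hΦ0 : Φ 0 = 1) :
    (∫ ω, (gibbs β (HNp N p J b (g ω)) (SzProd N (firstP N p))) ^ 2 ∂μ)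
      ≥ Φ ((p : ℝ) * β * b *
            ∫ ω, gibbs β (HNp N p J b (g ω)) (Sx N ⟨0, by omega⟩) ∂μ)
        + (2 / (β * J * (N : ℝ) * alphaP N p))
            * ∫ ω, gibbs β (HNp N p J b (g ω)) (UNp N p (g ω)) ∂μ :=
  stmt18_general μ p N (by omega) β J b hβ.ne' hJ.ne' g hgauss hindep Φ hΦ hΦ0 (firstP N p)
    (card_firstP hN) ⟨0, by omega⟩
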